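/- Assume the nonatomicity assumption and fix ε̄ ∈ (0, 1). Define H(t) = ∫ ∑_{ℓ=1}^L p_ℓ(x)·1{p_ℓ(x) ≥ t} dμ(x) for t ∈ ℝ (equal to P(p_Y(X) ≥ t)), and define the set-valued classifier Γ*_{ε̄} by Γ*_{ε̄}(x) = {ℓ ∈ Fin L : p_ℓ(x) ≥ H^{-1}(1 − ε̄)}, where H^{-1} is the generalized inverse of H. Then Γ*_{ε̄} is feasible, i.e. error(Γ*_{ε̄}) ≤ ε̄, and it is optimal: every set-valued classifier Γ with error(Γ) ≤ ε̄ satisfies size(Γ*_{ε̄}) ≤ size(Γ). -/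

import Mathlib

/-!
For a price `θ > 0` per label, the Lagrangian `θ * size + error` is minimized pointwise by the
classifier that keeps exactly the labels of score at least `θ`, since a label `ℓ` contributes
`θ - p x ℓ` to it. If the error of this classifier is exactly `ε`, any classifier of error at most
`ε` has at least its size. Without an atom at the generalized inverse `θ` of the tail function `H`
at level `1 - ε`, `H` is continuous there, so that `H θ = 1 - ε`, which says that the error is `ε`.
-/

open MeasureTheory Finset
open scoped Topology

theorem sum_le_sum_filter_nonneg {ι M : Type*} [Fintype ι] [AddCommMonoid M] [LinearOrder M]
    [IsOrderedAddMonoid M] (g : ι → M) (s : Finset ι) :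
    ∑ i ∈ s, g i ≤ ∑ i with 0 ≤ g i, g i := by
  classical
  rw [← univ_inter s, ← sum_ite_mem, sum_filter]
  gcongr with i
  split_ifs with hs hg hg
  exacts [le_rfl, (not_le.mp hg).le, hg, le_rfl]

theorem apply_sInf_setOf_le_of_continuousAt {α β : Type*} [ConditionallyCompleteLinearOrder α]
    [TopologicalSpace α] [OrderTopology α] [DenselyOrdered α] [NoMinOrder α]
    [LinearOrder β] [TopologicalSpace β] [OrderClosedTopology β] {F : α → β} {u : β}
    (hne : {t | F t ≤ u}.Nonempty) (hbdd : BddBelow {t | F t ≤ u})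
    (hF : ContinuousAt F (sInf {t | F t ≤ u})) : F (sInf {t | F t ≤ u}) = u := by
  apply le_antisymm
  · exact le_of_tendsto_of_frequently hF
      (mem_closure_iff_frequently.mp (csInf_mem_closure hne hbdd))
  · have h_left : ∀ᶠ t in 𝓝[<] sInf {t | F t ≤ u}, u ≤ F t := by
      filter_upwards [self_mem_nhdsWithin] with t ht
      have h_notMem : t ∉ {t | F t ≤ u} := notMem_of_lt_csInf ht hbdd
      exact (not_le.mp h_notMem).le
    exact ge_of_tendsto (hF.tendsto.mono_left nhdsWithin_le_nhds) h_left

theorem continuousAt_ite_le_const {α β : Type*} [LinearOrder α] [TopologicalSpace α]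
    [OrderClosedTopology α] [TopologicalSpace β] {a t : α} (h : a ≠ t) (b c : β) :
    ContinuousAt (fun s => if s ≤ a then b else c) t := by
  rcases h.lt_or_gt with hat | hta
  · exact continuousAt_const.congr <| (eventually_gt_nhds hat).mono fun s hs =>
      (if_neg hs.not_ge).symm
  · exact continuousAt_const.congr <| (eventually_lt_nhds hta).mono fun s hs =>
      (if_pos hs.le).symm

section SetValuedClassifier

variable {𝒳 ι : Type*} [MeasurableSpace 𝒳] {μ : Measure 𝒳}

theorem integrable_sum_mem {E : Type*} [NormedAddCommGroup E] [Finite ι] {f : 𝒳 → ι → E}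
    (hf : ∀ ℓ, Integrable (fun x => f x ℓ) μ) {Γ : 𝒳 → Finset ι}
    (hΓ : ∀ ℓ, MeasurableSet {x | ℓ ∈ Γ x}) : Integrable (fun x => ∑ ℓ ∈ Γ x, f x ℓ) μ := by
  classical
  cases nonempty_fintype ι
  have h_indicator : ∀ x, ∑ ℓ ∈ Γ x, f x ℓ =
      ∑ ℓ, {x | ℓ ∈ Γ x}.indicator (fun x => f x ℓ) x := fun x => by
    simp [Set.indicator_apply]
  simp only [h_indicator]
  exact integrable_finsetSum _ fun ℓ _ => (hf ℓ).indicator (hΓ ℓ)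

theorem integrable_card [Finite ι] [IsFiniteMeasure μ] {Γ : 𝒳 → Finset ι}
    (hΓ : ∀ ℓ, MeasurableSet {x | ℓ ∈ Γ x}) : Integrable (fun x => (#(Γ x) : ℝ)) μ := by
  simpa using integrable_sum_mem (f := fun _ _ => (1 : ℝ)) (fun _ => integrable_const 1) hΓ

/-- The error rate `P(Y ∉ Γ(X))` of a set-valued classifier `Γ`, where `X` has law `μ` and
`p x ℓ` is the conditional probability of the class `ℓ` at `x`. -/
noncomputable def errorRate (μ : Measure 𝒳) (p : 𝒳 → ι → ℝ) (Γ : 𝒳 → Finset ι) : ℝ :=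
  ∫ x, (1 - ∑ ℓ ∈ Γ x, p x ℓ) ∂μ

/-- The mean number of labels `E|Γ(X)|` that a set-valued classifier `Γ` outputs, where `X` has
law `μ`. -/
noncomputable def averageSize (μ : Measure 𝒳) (Γ : 𝒳 → Finset ι) : ℝ :=
  ∫ x, (#(Γ x) : ℝ) ∂μ

variable [Fintype ι] {p : 𝒳 → ι → ℝ}

/-- The set-valued classifier that keeps the labels of score at least `t`; the oracle `Γ*` of the
average error constraint has this form. -/
noncomputable def thresholdClassifier (p : 𝒳 → ι → ℝ) (t : ℝ) (x : 𝒳) : Finset ι :=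
  {ℓ | t ≤ p x ℓ}

/-- The tail function `H(t) = P(p_Y(X) ≥ t)` of the score of the true class, written as an
integral over the features only. -/
noncomputable def scoreTail (μ : Measure 𝒳) (p : 𝒳 → ι → ℝ) (t : ℝ) : ℝ :=
  ∫ x, ∑ ℓ, (if t ≤ p x ℓ then p x ℓ else 0) ∂μ

/-- The generalized inverse `H⁻¹(u)` of the tail function `H = scoreTail μ p`, with the junk value
`0` when `{t | H t ≤ u}` is empty or unbounded below. -/
noncomputable def scoreQuantile (μ : Measure 𝒳) (p : 𝒳 → ι → ℝ) (u : ℝ) : ℝ :=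
  sInf {t | scoreTail μ p t ≤ u}

theorem measurableSet_mem_thresholdClassifier (hp : Measurable p) (t : ℝ) (ℓ : ι) :
    MeasurableSet {x | ℓ ∈ thresholdClassifier p t x} := by
  simpa [thresholdClassifier] using measurableSet_le measurable_const (hp.eval (a := ℓ))

theorem scoreTail_eq_integral_sum_thresholdClassifier (t : ℝ) :
    scoreTail μ p t = ∫ x, ∑ ℓ ∈ thresholdClassifier p t x, p x ℓ ∂μ := by
  simp only [scoreTail, thresholdClassifier, sum_filter]

theorem errorRate_thresholdClassifier [IsProbabilityMeasure μ] (hp : Measurable p)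
    (hpi : ∀ ℓ, Integrable (fun x => p x ℓ) μ) (t : ℝ) :
    errorRate μ p (thresholdClassifier p t) = 1 - scoreTail μ p t := by
  rw [errorRate, integral_sub (integrable_const 1)
    (integrable_sum_mem hpi (measurableSet_mem_thresholdClassifier hp t)),
    scoreTail_eq_integral_sum_thresholdClassifier]
  simp

theorem continuousAt_scoreTail (hp : Measurable p) (hpi : ∀ ℓ, Integrable (fun x => p x ℓ) μ)
    {t : ℝ} (hatom : ∀ ℓ, μ {x | p x ℓ = t} = 0) : ContinuousAt (scoreTail μ p) t := by
  refine continuousAt_of_dominated (bound := fun x => ∑ ℓ, ‖p x ℓ‖)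
    (.of_forall fun s => ?_) (.of_forall fun s => .of_forall fun x => ?_)
    (integrable_finsetSum _ fun ℓ _ => (hpi ℓ).norm) ?_
  · have := (integrable_sum_mem hpi
      (measurableSet_mem_thresholdClassifier hp s)).aestronglyMeasurable
    simpa only [thresholdClassifier, sum_filter] using this
  · refine norm_sum_le_of_le _ fun ℓ _ => ?_
    split_ifs <;> simp
  · have h_ne : ∀ᵐ x ∂μ, ∀ ℓ, p x ℓ ≠ t :=
      ae_all_iff.mpr fun ℓ => by simpa [ae_iff] using hatom ℓ
    filter_upwards [h_ne] with x hx
    exact tendsto_finsetSum _ fun ℓ _ => continuousAt_ite_le_const (hx ℓ) _ _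

theorem scoreTail_of_nonpos [IsProbabilityMeasure μ] (hp : ∀ x, p x ∈ stdSimplex ℝ ι) {t : ℝ}
    (ht : t ≤ 0) : scoreTail μ p t = 1 := by
  have h_keep : ∀ x ℓ, t ≤ p x ℓ := fun x ℓ => ht.trans ((hp x).1 ℓ)
  simp [scoreTail, h_keep, (hp _).2]

theorem scoreTail_of_one_lt (hp : ∀ x, p x ∈ stdSimplex ℝ ι) {t : ℝ} (ht : 1 < t) :
    scoreTail μ p t = 0 := by
  have h_drop : ∀ x ℓ, ¬t ≤ p x ℓ := fun x ℓ =>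
    ((mem_Icc_of_mem_stdSimplex (hp x) ℓ).2.trans_lt ht).not_ge
  simp [scoreTail, h_drop]

theorem scoreTail_scoreQuantile [IsProbabilityMeasure μ] (hp : ∀ x, p x ∈ stdSimplex ℝ ι)
    {u : ℝ} (hu0 : 0 ≤ u) (hu1 : u < 1)
    (hcont : ContinuousAt (scoreTail μ p) (scoreQuantile μ p u)) :
    scoreTail μ p (scoreQuantile μ p u) = u := by
  refine apply_sInf_setOf_le_of_continuousAt ⟨2, ?_⟩ ⟨0, fun t ht => ?_⟩ hcont
  · exact (scoreTail_of_one_lt hp one_lt_two).trans_le hu0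
  · by_contra! h_neg
    exact (hu1.trans_eq (scoreTail_of_nonpos hp h_neg.le).symm).not_ge ht

theorem lagrangian_thresholdClassifier_le [IsFiniteMeasure μ] (hp : Measurable p)
    (hpi : ∀ ℓ, Integrable (fun x => p x ℓ) μ) (θ : ℝ) {Γ : 𝒳 → Finset ι}
    (hΓ : ∀ ℓ, MeasurableSet {x | ℓ ∈ Γ x}) :
    θ * averageSize μ (thresholdClassifier p θ) + errorRate μ p (thresholdClassifier p θ) ≤
      θ * averageSize μ Γ + errorRate μ p Γ := by
  have h_int_card {Δ : 𝒳 → Finset ι} (hΔ : ∀ ℓ, MeasurableSet {x | ℓ ∈ Δ x}) :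
      Integrable (fun x => θ * (#(Δ x) : ℝ)) μ := (integrable_card hΔ).const_mul θ
  have h_int_error {Δ : 𝒳 → Finset ι} (hΔ : ∀ ℓ, MeasurableSet {x | ℓ ∈ Δ x}) :
      Integrable (fun x => 1 - ∑ ℓ ∈ Δ x, p x ℓ) μ :=
    (integrable_const 1).sub (integrable_sum_mem hpi hΔ)
  have hΓθ := measurableSet_mem_thresholdClassifier hp θ
  simp only [averageSize, errorRate, ← integral_const_mul]
  rw [← integral_add (h_int_card hΓθ) (h_int_error hΓθ),
    ← integral_add (h_int_card hΓ) (h_int_error hΓ)]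
  refine integral_mono ((h_int_card hΓθ).add (h_int_error hΓθ))
    ((h_int_card hΓ).add (h_int_error hΓ)) fun x => ?_
  have h_gain := sum_le_sum_filter_nonneg (fun ℓ => p x ℓ - θ) (Γ x)
  simp only [sub_nonneg, sum_sub_distrib, sum_const, nsmul_eq_mul] at h_gain
  simp only [thresholdClassifier]
  linarith

theorem averageSize_thresholdClassifier_le [IsFiniteMeasure μ] (hp : Measurable p)
    (hpi : ∀ ℓ, Integrable (fun x => p x ℓ) μ) {θ : ℝ} (hθ : 0 < θ) {Γ : 𝒳 → Finset ι}
    (hΓ : ∀ ℓ, MeasurableSet {x | ℓ ∈ Γ x})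
    (herr : errorRate μ p Γ ≤ errorRate μ p (thresholdClassifier p θ)) :
    averageSize μ (thresholdClassifier p θ) ≤ averageSize μ Γ := by
  refine le_of_mul_le_mul_left ?_ hθ
  linarith [lagrangian_thresholdClassifier_le hp hpi θ hΓ]

theorem average_error_control_oracle_general [IsProbabilityMeasure μ] (hp : Measurable p)
    (hpΔ : ∀ x, p x ∈ stdSimplex ℝ ι) {ε : ℝ} (hε0 : 0 < ε) (hε1 : ε ≤ 1)
    (hatom : ∀ ℓ, μ {x | p x ℓ = scoreQuantile μ p (1 - ε)} = 0) :
    errorRate μ p (thresholdClassifier p (scoreQuantile μ p (1 - ε))) = ε ∧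
      ∀ Γ : 𝒳 → Finset ι, (∀ ℓ, MeasurableSet {x | ℓ ∈ Γ x}) → errorRate μ p Γ ≤ ε →
        averageSize μ (thresholdClassifier p (scoreQuantile μ p (1 - ε))) ≤ averageSize μ Γ := by
  set θ := scoreQuantile μ p (1 - ε)
  have hpi : ∀ ℓ, Integrable (fun x => p x ℓ) μ := fun ℓ =>
    .of_mem_Icc 0 1 hp.eval.aemeasurable (.of_forall fun x => mem_Icc_of_mem_stdSimplex (hpΔ x) ℓ)
  have h_tail : scoreTail μ p θ = 1 - ε :=
    scoreTail_scoreQuantile hpΔ (by linarith) (by linarith) (continuousAt_scoreTail hp hpi hatom)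
  have h_error : errorRate μ p (thresholdClassifier p θ) = ε := by
    rw [errorRate_thresholdClassifier hp hpi, h_tail, sub_sub_cancel]
  have hθ : 0 < θ := by
    by_contra! h_nonpos
    linarith [scoreTail_of_nonpos (μ := μ) hpΔ h_nonpos]
  exact ⟨h_error, fun Γ hΓ herr =>
    averageSize_thresholdClassifier_le hp hpi hθ hΓ (herr.trans_eq h_error.symm)⟩

end SetValuedClassifier

/-- under nonatomicity, the thresholding classifier at level
H⁻¹(1 - ε̄) is feasible for the average error constraint and minimizes the
average size among all classifiers of average error at most ε̄. -/
theorem average_error_control_oracle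
    {𝒳 : Type*} [m𝒳 : MeasurableSpace 𝒳] (μ : Measure 𝒳) [IsProbabilityMeasure μ]
    (L : ℕ) (hL : 1 ≤ L)
    (p : 𝒳 → Fin L → ℝ) (hp : Measurable p)
    (hp0 : ∀ x ℓ, 0 ≤ p x ℓ) (hpsum : ∀ x, ∑ ℓ, p x ℓ = 1)
    (hatom : ∀ (ℓ : Fin L) (t : ℝ), μ {x | p x ℓ = t} = 0)
    (εbar : ℝ) (hεbar0 : 0 < εbar) (hεbar1 : εbar < 1)
    (H : ℝ → ℝ)
    (hH : H = fun t => ∫ x, ∑ ℓ : Fin L, (if t ≤ p x ℓ then p x ℓ else 0) ∂μ)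
    (θ : ℝ) (hθ : θ = sInf {t : ℝ | H t ≤ 1 - εbar})
    (Γstar : 𝒳 → Finset (Fin L))
    (hΓstar : ∀ x, Γstar x = Finset.univ.filter (fun ℓ => θ ≤ p x ℓ)) :
    (∫ x, (1 - ∑ ℓ ∈ Γstar x, p x ℓ) ∂μ) ≤ εbar ∧
    ∀ Γ : 𝒳 → Finset (Fin L), @Measurable 𝒳 (Finset (Fin L)) m𝒳 ⊤ Γ →
      (∫ x, (1 - ∑ ℓ ∈ Γ x, p x ℓ) ∂μ) ≤ εbar →
      (∫ x, ((Γstar x).card : ℝ) ∂μ) ≤ ∫ x, ((Γ x).card : ℝ) ∂μ := by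
  obtain rfl : Γstar = thresholdClassifier p θ := funext hΓstar
  subst hH hθ
  have h_oracle := average_error_control_oracle_general (μ := μ) hp (fun x => ⟨hp0 x, hpsum x⟩)
    hεbar0 hεbar1.le fun ℓ => hatom ℓ _
  exact ⟨h_oracle.1.le, fun Γ hΓ => h_oracle.2 Γ fun ℓ => hΓ (t := {s | ℓ ∈ s}) trivial⟩
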